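/- arXiv:2604.26863 — 2 statements merged into one kernel-verified Lean document; each statement's English description precedes it below -/
import Mathlib

section
/- Let κ = (κ^h, κ^c) ∈ L²([0,1]; ℂ²). For every z = (z^h, z^c) in D(A), the perturbed operator A − κC is quasi-dissipative: Re ⟨z, (A − κC) z⟩ ≤ ( |M|₂ + ‖κ‖²/u₂ )·‖z‖², where (A − κC)z := Az − z^c(0)·κ, ⟨·,·⟩ is the L² inner product on [0,1] and ‖·‖ the L² norm. -/
open MeasureTheory intervalIntegral

/-- A function `f : ℝ → ℂ` is `H¹` on `[0,1]` with derivative `f'`. -/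
def IsH1 (f f' : ℝ → ℂ) : Prop :=
  ContinuousOn f (Set.Icc 0 1) ∧
  IntervalIntegrable f' volume 0 1 ∧
  IntervalIntegrable (fun x => ‖f' x‖ ^ 2) volume 0 1 ∧
  ∀ x ∈ Set.Icc (0:ℝ) 1, f x = f 0 + ∫ t in (0:ℝ)..x, f' t

/-- Membership in `L²([0,1]; ℂ)`. -/
def MemL2 (f : ℝ → ℂ) : Prop :=
  AEStronglyMeasurable f (volume.restrict (Set.Icc (0:ℝ) 1)) ∧
  IntervalIntegrable (fun x => ‖f x‖ ^ 2) volume 0 1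

/-- The spectral (operator) norm of the coupling matrix `M = [[−c₁, c₁], [c₂, −c₂]]`. -/
noncomputable def specNormM (c₁ c₂ : ℝ) : ℝ :=
  ‖Matrix.toEuclideanCLM (𝕜 := ℝ) !![-c₁, c₁; c₂, -c₂]‖

/-!
Write `A z = D z' + M z` with `D = diag(-u₁, u₂)` symmetric. Integration by parts for absolutely
continuous functions turns `Re ⟨z, D z'⟩` into half the increment of `Re ⟨z(x), D z(x)⟩` over
the interval, and the boundary conditions reduce it to `-u₁|z^h(1)|²/2 - u₂|z^c(0)|²/2`. The
coupling contributes at most `|M|₂ ‖z‖²`. The perturbation is at most `|z^c(0)| ‖κ‖ ‖z‖` by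
Cauchy–Schwarz, and Young's inequality absorbs its boundary factor into the outflow term
`-u₂|z^c(0)|²/2`, at the cost of `‖κ‖² ‖z‖² / (2 * u₂)`.
-/

open Set
open scoped ENNReal

section Primitive

variable {E F : Type*} [NormedAddCommGroup E] [NormedSpace ℝ E] [NormedAddCommGroup F]
  [NormedSpace ℝ F] {a b : ℝ}

/-- `f` is an indefinite integral on `[a, b]` of the integrable function `f'`, that is, absolutely
continuous with almost everywhere derivative `f'`. This is the regularity `W^{1,1}`; membership in
`H¹` additionally asks for `f' ∈ L²`. -/
structure IsPrimitiveOn (f f' : ℝ → E) (a b : ℝ) : Prop where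
  intervalIntegrable : IntervalIntegrable f' volume a b
  eq_add_integral : ∀ x ∈ uIcc a b, f x = f a + ∫ t in a..x, f' t

namespace IsPrimitiveOn

theorem continuousOn {f f' : ℝ → E} (h : IsPrimitiveOn f f' a b) : ContinuousOn f (uIcc a b) :=
  (continuousOn_const.add
    (continuousOn_primitive_interval' h.intervalIntegrable left_mem_uIcc)).congr h.eq_add_integral

theorem clm_comp [CompleteSpace E] [CompleteSpace F] {f f' : ℝ → E} (h : IsPrimitiveOn f f' a b)
    (L : E →L[ℝ] F) : IsPrimitiveOn (fun x ↦ L (f x)) (fun x ↦ L (f' x)) a b where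
  intervalIntegrable := ⟨L.integrable_comp h.intervalIntegrable.1,
    L.integrable_comp h.intervalIntegrable.2⟩
  eq_add_integral x hx := by
    have hx' : IntervalIntegrable f' volume a x :=
      h.intervalIntegrable.mono_set (uIcc_subset_uIcc_left hx)
    rw [h.eq_add_integral x hx, map_add, L.intervalIntegral_comp_comm hx']

theorem piLp {ι : Type*} [Fintype ι] {G : ι → Type*} [∀ i, NormedAddCommGroup (G i)]
    [∀ i, NormedSpace ℝ (G i)] [∀ i, CompleteSpace (G i)] {f f' : ℝ → PiLp 2 G}
    (h : ∀ i, IsPrimitiveOn (f · i) (f' · i) a b) : IsPrimitiveOn f f' a b := by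
  have hint : IntervalIntegrable f' volume a b :=
    ⟨integrable_piLp_iff.2 fun i ↦ (h i).intervalIntegrable.1,
      integrable_piLp_iff.2 fun i ↦ (h i).intervalIntegrable.2⟩
  refine ⟨hint, fun x hx ↦ PiLp.ext fun i ↦ ?_⟩
  have hproj : ∫ t in a..x, f' t i = (∫ t in a..x, f' t) i :=
    (PiLp.proj (𝕜 := ℝ) 2 G i).intervalIntegral_comp_comm
      (hint.mono_set (uIcc_subset_uIcc_left hx))
  rw [(h i).eq_add_integral x hx, PiLp.add_apply, hproj]

theorem exists_absolutelyContinuousOnInterval {f f' : ℝ → ℝ} (h : IsPrimitiveOn f f' a b) :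
    ∃ g : ℝ → ℝ, AbsolutelyContinuousOnInterval g a b ∧ EqOn g f (uIcc a b) ∧
      ∀ᵐ x, x ∈ uIcc a b → deriv g x = f' x := by
  refine ⟨fun x ↦ f a + ∫ t in a..x, f' t, ?_, fun x hx ↦ (h.eq_add_integral x hx).symm, ?_⟩
  · exact ((LipschitzWith.const (f a)).lipschitzOnWith.absolutelyContinuousOnInterval).add
      (h.intervalIntegrable.absolutelyContinuousOnInterval_intervalIntegral left_mem_uIcc)
  · filter_upwards [h.intervalIntegrable.ae_hasDerivAt_integral] with x hderiv hx
    exact ((hderiv hx a left_mem_uIcc).const_add (f a)).deriv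

theorem integral_mul_add_mul_eq_sub {f f' g g' : ℝ → ℝ} (hf : IsPrimitiveOn f f' a b)
    (hg : IsPrimitiveOn g g' a b) :
    ∫ x in a..b, (f' x * g x + f x * g' x) = f b * g b - f a * g a := by
  obtain ⟨F, hF, hFf, hF'⟩ := hf.exists_absolutelyContinuousOnInterval
  obtain ⟨G, hG, hGg, hG'⟩ := hg.exists_absolutelyContinuousOnInterval
  rw [← hFf left_mem_uIcc, ← hFf right_mem_uIcc, ← hGg left_mem_uIcc, ← hGg right_mem_uIcc,
    ← hF.integral_deriv_mul_eq_sub hG]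
  refine integral_congr_ae ?_
  filter_upwards [hF', hG'] with x hFx hGx hx
  have hx := uIoc_subset_uIcc hx
  rw [hFx hx, hGx hx, hFf hx, hGg hx]

end IsPrimitiveOn

end Primitive

theorem memLp_uIoc_of_continuousOn {E : Type*} [NormedAddCommGroup E] {f : ℝ → E} {a b : ℝ}
    (hf : ContinuousOn f (uIcc a b)) (p : ℝ≥0∞) : MemLp f p (volume.restrict (uIoc a b)) := by
  have : IsFiniteMeasure (volume.restrict (uIoc a b)) :=
    isFiniteMeasure_restrict.2 measure_Ioc_lt_top.ne
  obtain ⟨C, hC⟩ := isCompact_uIcc.exists_bound_of_continuousOn hf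
  refine .of_bound ((hf.mono uIoc_subset_uIcc).aestronglyMeasurable measurableSet_uIoc) C ?_
  filter_upwards [ae_restrict_mem measurableSet_uIoc] with x hx
  exact hC x (uIoc_subset_uIcc hx)

section InnerProduct

variable {𝕜 E : Type*} [RCLike 𝕜] [NormedAddCommGroup E] [InnerProductSpace 𝕜 E] {a b : ℝ}

theorem intervalIntegrable_inner {f g : ℝ → E} (hf : ContinuousOn f (uIcc a b))
    (hg : IntervalIntegrable g volume a b) :
    IntervalIntegrable (fun x ↦ inner 𝕜 (f x) (g x)) volume a b :=
  intervalIntegrable_iff.2 <| (hg.norm.continuousOn_mul hf.norm).def'.mono'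
    (((hf.mono uIoc_subset_uIcc).aestronglyMeasurable measurableSet_uIoc).inner hg.def'.1)
    (.of_forall fun _ ↦ norm_inner_le_norm _ _)

theorem norm_integral_inner_le_sqrt_mul_sqrt {α : Type*} [MeasurableSpace α] {μ : Measure α}
    {f g : α → E} (hf : MemLp f 2 μ) (hg : MemLp g 2 μ) :
    ‖∫ x, inner 𝕜 (f x) (g x) ∂μ‖ ≤ √(∫ x, ‖f x‖ ^ 2 ∂μ) * √(∫ x, ‖g x‖ ^ 2 ∂μ) := by
  have holder := integral_mul_norm_le_Lp_mul_Lq (μ := μ) Real.HolderConjugate.two_two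
    (by simpa using hf) (by simpa using hg)
  simp only [Real.rpow_two, ← Real.sqrt_eq_rpow] at holder
  exact (norm_integral_le_of_norm_le (hf.norm.integrable_mul hg.norm)
    (.of_forall fun _ ↦ norm_inner_le_norm _ _)).trans holder

end InnerProduct

theorem sqrt_mul_sqrt_sq_mul_le {γ s t : ℝ} (hγ : 0 < γ) (hs : 0 ≤ s) (ht : 0 ≤ t) (w : ℝ) :
    √s * √(w ^ 2 * t) ≤ γ * w ^ 2 / 2 + t / (2 * γ) * s := by
  set p := √s * √t
  have hp : p ^ 2 = s * t := by rw [mul_pow, Real.sq_sqrt hs, Real.sq_sqrt ht]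
  have young : 0 ≤ (γ * |w| - p) ^ 2 / (2 * γ) := by positivity
  calc √s * √(w ^ 2 * t) = |w| * p := by
        rw [Real.sqrt_mul (sq_nonneg w), Real.sqrt_sq_eq_abs]; ring
    _ ≤ |w| * p + (γ * |w| - p) ^ 2 / (2 * γ) := le_add_of_nonneg_right young
    _ = γ * |w| ^ 2 / 2 + p ^ 2 / (2 * γ) := by field_simp; ring
    _ = γ * w ^ 2 / 2 + t / (2 * γ) * s := by rw [sq_abs, hp]; ring

section SymmetricHyperbolic

variable {E : Type*} [NormedAddCommGroup E] [InnerProductSpace ℝ E] [FiniteDimensional ℝ E]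
  {a b : ℝ} {z z' : ℝ → E}

theorem IsPrimitiveOn.integral_inner_add_inner_eq_sub {f f' g g' : ℝ → E}
    (hf : IsPrimitiveOn f f' a b) (hg : IsPrimitiveOn g g' a b) :
    ∫ x in a..b, (inner ℝ (f' x) (g x) + inner ℝ (f x) (g' x)) =
      inner ℝ (f b) (g b) - inner ℝ (f a) (g a) := by
  have := FiniteDimensional.complete ℝ E
  let e := stdOrthonormalBasis ℝ E
  have coord {h h' : ℝ → E} (hh : IsPrimitiveOn h h' a b) (i) :
      IsPrimitiveOn (fun x ↦ e.repr (h x) i) (fun x ↦ e.repr (h' x) i) a b := by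
    simpa only [e.repr_apply_apply] using! hh.clm_comp (innerSL ℝ (e i))
  have inner_eq (v w : E) : inner ℝ v w = ∑ i, e.repr v i * e.repr w i := by
    simp only [← e.repr.inner_map_map v w, PiLp.inner_apply, RCLike.inner_apply', conj_trivial]
  simp only [inner_eq, ← Finset.sum_add_distrib, ← Finset.sum_sub_distrib]
  rw [intervalIntegral.integral_finsetSum]
  · exact Finset.sum_congr rfl fun i _ ↦ (coord hf i).integral_mul_add_mul_eq_sub (coord hg i)
  · exact fun i _ ↦
      ((coord hf i).intervalIntegrable.mul_continuousOn (coord hg i).continuousOn).add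
        ((coord hg i).intervalIntegrable.continuousOn_mul (coord hf i).continuousOn)

theorem IsPrimitiveOn.integral_inner_symmetric_eq {D : E →L[ℝ] E}
    (hD : (D : E →ₗ[ℝ] E).IsSymmetric) (hz : IsPrimitiveOn z z' a b) :
    ∫ x in a..b, inner ℝ (z x) (D (z' x)) =
      (inner ℝ (z b) (D (z b)) - inner ℝ (z a) (D (z a))) / 2 := by
  have := FiniteDimensional.complete ℝ E
  rw [← hz.integral_inner_add_inner_eq_sub (hz.clm_comp D), eq_div_iff two_ne_zero,
    ← intervalIntegral.integral_mul_const]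
  refine intervalIntegral.integral_congr fun x _ ↦ ?_
  have hsymm : inner ℝ (z' x) (D (z x)) = inner ℝ (z x) (D (z' x)) := by
    rw [real_inner_comm]; exact hD _ _
  simp only [hsymm, mul_two]

theorem IsPrimitiveOn.integral_inner_perturbed_transport_le {D : E →L[ℝ] E}
    (hD : (D : E →ₗ[ℝ] E).IsSymmetric) {B : E → E} (hBcont : Continuous B) {m : ℝ}
    (hB : ∀ v, inner ℝ v (B v) ≤ m * ‖v‖ ^ 2)
    (hab : a ≤ b) (hz : IsPrimitiveOn z z' a b) {k : ℝ → E}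
    (hk : MemLp k 2 (volume.restrict (Ioc a b))) :
    ∫ x in a..b, inner ℝ (z x) (D (z' x) + B (z x) - k x) ≤
      (inner ℝ (z b) (D (z b)) - inner ℝ (z a) (D (z a))) / 2 + m * (∫ x in a..b, ‖z x‖ ^ 2) +
        √(∫ x in a..b, ‖z x‖ ^ 2) * √(∫ x in a..b, ‖k x‖ ^ 2) := by
  have := FiniteDimensional.complete ℝ E
  have hzc := hz.continuousOn
  have hDint := intervalIntegrable_inner (𝕜 := ℝ) hzc (hz.clm_comp D).intervalIntegrable
  have hBint : IntervalIntegrable (fun x ↦ inner ℝ (z x) (B (z x))) volume a b :=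
    (ContinuousOn.inner (𝕜 := ℝ) hzc (hBcont.comp_continuousOn hzc)).intervalIntegrable
  have hkint := intervalIntegrable_inner (𝕜 := ℝ) hzc
    ((intervalIntegrable_iff_integrableOn_Ioc_of_le hab).2 (hk.integrable one_le_two))
  have coupling_le : ∫ x in a..b, inner ℝ (z x) (B (z x)) ≤ m * ∫ x in a..b, ‖z x‖ ^ 2 := by
    rw [← intervalIntegral.integral_const_mul]
    exact intervalIntegral.integral_mono hab hBint
      ((hzc.norm.pow 2).intervalIntegrable.const_mul m) fun x ↦ hB (z x)
  have hz2 : MemLp z 2 (volume.restrict (Ioc a b)) :=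
    uIoc_of_le hab ▸ memLp_uIoc_of_continuousOn hzc 2
  have perturbation_le : -∫ x in a..b, inner ℝ (z x) (k x) ≤
      √(∫ x in a..b, ‖z x‖ ^ 2) * √(∫ x in a..b, ‖k x‖ ^ 2) := by
    simp only [intervalIntegral.integral_of_le hab]
    exact (neg_le_abs _).trans (norm_integral_inner_le_sqrt_mul_sqrt (𝕜 := ℝ) hz2 hk)
  simp only [inner_sub_right, inner_add_right]
  rw [intervalIntegral.integral_sub (hDint.add hBint) hkint,
    intervalIntegral.integral_add hDint hBint, hz.integral_inner_symmetric_eq hD]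
  linarith

theorem IsPrimitiveOn.integral_inner_perturbed_transport_le_mul {D : E →L[ℝ] E}
    (hD : (D : E →ₗ[ℝ] E).IsSymmetric) {B : E → E} (hBcont : Continuous B) {m : ℝ}
    (hB : ∀ v, inner ℝ v (B v) ≤ m * ‖v‖ ^ 2) (hab : a ≤ b) (hz : IsPrimitiveOn z z' a b)
    {γ w : ℝ} (hγ : 0 < γ)
    (hboundary : inner ℝ (z b) (D (z b)) - inner ℝ (z a) (D (z a)) ≤ -(γ * w ^ 2))
    {k : ℝ → E} (hk : MemLp k 2 (volume.restrict (Ioc a b))) {K : ℝ} (hK : 0 ≤ K)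
    (hkK : ∫ x in a..b, ‖k x‖ ^ 2 ≤ w ^ 2 * K) :
    ∫ x in a..b, inner ℝ (z x) (D (z' x) + B (z x) - k x) ≤
      (m + K / (2 * γ)) * ∫ x in a..b, ‖z x‖ ^ 2 := by
  set Z := ∫ x in a..b, ‖z x‖ ^ 2
  have hZ : 0 ≤ Z := intervalIntegral.integral_nonneg hab fun _ _ ↦ by positivity
  have perturbation_le : √Z * √(∫ x in a..b, ‖k x‖ ^ 2) ≤ γ * w ^ 2 / 2 + K / (2 * γ) * Z :=
    calc √Z * √(∫ x in a..b, ‖k x‖ ^ 2) ≤ √Z * √(w ^ 2 * K) := by gcongr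
      _ ≤ γ * w ^ 2 / 2 + K / (2 * γ) * Z := sqrt_mul_sqrt_sq_mul_le hγ hZ hK w
  linarith [hz.integral_inner_perturbed_transport_le hD hBcont hB hab hk]

end SymmetricHyperbolic

section RealMatrix

variable {𝕜 ι : Type*} [RCLike 𝕜] [Fintype ι] [DecidableEq ι]

theorem re_inner_toEuclideanCLM_map_ofReal_le (M : Matrix ι ι ℝ) (v : EuclideanSpace 𝕜 ι) :
    RCLike.re (inner 𝕜 v (Matrix.toEuclideanCLM (𝕜 := 𝕜) (M.map RCLike.ofReal) v)) ≤
      ‖Matrix.toEuclideanCLM (𝕜 := ℝ) M‖ * ‖v‖ ^ 2 := by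
  set T := Matrix.toEuclideanCLM (𝕜 := ℝ) M with hT
  let x : EuclideanSpace ℝ ι := WithLp.toLp 2 fun i ↦ RCLike.re (v i)
  let y : EuclideanSpace ℝ ι := WithLp.toLp 2 fun i ↦ RCLike.im (v i)
  have inner_le (w : EuclideanSpace ℝ ι) : inner ℝ w (T w) ≤ ‖T‖ * ‖w‖ ^ 2 :=
    calc inner ℝ w (T w) ≤ ‖w‖ * ‖T w‖ := real_inner_le_norm _ _
      _ ≤ ‖w‖ * (‖T‖ * ‖w‖) := by gcongr; exact T.le_opNorm w
      _ = ‖T‖ * ‖w‖ ^ 2 := by ring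
  have inner_eq : RCLike.re (inner 𝕜 v (Matrix.toEuclideanCLM (𝕜 := 𝕜) (M.map RCLike.ofReal) v)) =
      inner ℝ x (T x) + inner ℝ y (T y) := by
    simp [PiLp.inner_apply, x, y, hT, Matrix.ofLp_toEuclideanCLM, Matrix.mulVec, dotProduct,
      ← Finset.sum_add_distrib, Finset.sum_mul]
  have norm_eq : ‖v‖ ^ 2 = ‖x‖ ^ 2 + ‖y‖ ^ 2 := by
    simp only [EuclideanSpace.norm_sq_eq, ← Finset.sum_add_distrib, x, y, Real.norm_eq_abs, sq_abs,
      RCLike.norm_sq_eq_def, ← sq]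
  rw [inner_eq, norm_eq, mul_add]
  exact add_le_add (inner_le x) (inner_le y)

end RealMatrix

section EuclideanComplex

variable {ι : Type*} [Fintype ι] {a b : ℝ}

theorem real_inner_eq_re_complex_inner (v w : EuclideanSpace ℂ ι) :
    inner ℝ v w = (inner ℂ v w).re := by
  simp [PiLp.inner_apply, Complex.inner]

theorem re_integral_complex_inner {f g : ℝ → EuclideanSpace ℂ ι} (hf : ContinuousOn f (uIcc a b))
    (hg : IntervalIntegrable g volume a b) :
    (∫ x in a..b, inner ℂ (f x) (g x)).re = ∫ x in a..b, inner ℝ (f x) (g x) := by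
  simp only [real_inner_eq_re_complex_inner]
  exact (Complex.reCLM.intervalIntegral_comp_comm (intervalIntegrable_inner hf hg)).symm

end EuclideanComplex

section HeatExchanger

/-- The operator `diag(-u₁, u₂)` on `ℂ²` by which `z'` enters `A z`, in the coordinates
`z = !₂[z^h, z^c]`. -/
noncomputable def transportCLM (u₁ u₂ : ℝ) :
    EuclideanSpace ℂ (Fin 2) →L[ℂ] EuclideanSpace ℂ (Fin 2) :=
  Matrix.toEuclideanCLM (𝕜 := ℂ) (Matrix.diagonal ![-(u₁ : ℂ), u₂])

/-- The zeroth-order part of `A`: the real matrix `M`, extended to a complex linear operator on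
`ℂ²`. -/
noncomputable def couplingCLM (c₁ c₂ : ℝ) :
    EuclideanSpace ℂ (Fin 2) →L[ℂ] EuclideanSpace ℂ (Fin 2) :=
  Matrix.toEuclideanCLM (𝕜 := ℂ) (!![-c₁, c₁; c₂, -c₂].map RCLike.ofReal)

theorem transportCLM_apply (u₁ u₂ : ℝ) (v : EuclideanSpace ℂ (Fin 2)) :
    transportCLM u₁ u₂ v = !₂[-u₁ • v 0, u₂ • v 1] := by
  ext i
  fin_cases i <;> simp [transportCLM, Matrix.ofLp_toEuclideanCLM]

theorem couplingCLM_apply (c₁ c₂ : ℝ) (v : EuclideanSpace ℂ (Fin 2)) :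
    couplingCLM c₁ c₂ v = !₂[-(c₁ : ℂ) * (v 0 - v 1), (c₂ : ℂ) * (v 0 - v 1)] := by
  ext i
  fin_cases i <;> simp [couplingCLM, Matrix.ofLp_toEuclideanCLM] <;> ring

theorem inner_transportCLM (u₁ u₂ : ℝ) (v w : EuclideanSpace ℂ (Fin 2)) :
    inner ℝ v (transportCLM u₁ u₂ w) = -u₁ * inner ℝ (v 0) (w 0) + u₂ * inner ℝ (v 1) (w 1) := by
  rw [transportCLM_apply, PiLp.inner_apply, Fin.sum_univ_two]
  exact congrArg₂ (· + ·) (real_inner_smul_right _ _ _) (real_inner_smul_right _ _ _)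

theorem isSymmetric_transportCLM (u₁ u₂ : ℝ) :
    ((transportCLM u₁ u₂).restrictScalars ℝ : EuclideanSpace ℂ (Fin 2) →ₗ[ℝ] _).IsSymmetric := by
  intro v w
  change inner ℝ (transportCLM u₁ u₂ v) w = inner ℝ v (transportCLM u₁ u₂ w)
  rw [real_inner_comm, inner_transportCLM, inner_transportCLM, real_inner_comm (v 0),
    real_inner_comm (v 1)]

theorem inner_couplingCLM_self_le (c₁ c₂ : ℝ) (v : EuclideanSpace ℂ (Fin 2)) :
    inner ℝ v (couplingCLM c₁ c₂ v) ≤ specNormM c₁ c₂ * ‖v‖ ^ 2 :=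
  (real_inner_eq_re_complex_inner _ _).trans_le (re_inner_toEuclideanCLM_map_ofReal_le _ v)

theorem inner_transportCLM_add_couplingCLM_sub (u₁ u₂ c₁ c₂ : ℝ) (ζh ζc ζh' ζc' kh kc w : ℂ) :
    inner ℂ !₂[ζh, ζc] (transportCLM u₁ u₂ !₂[ζh', ζc'] + couplingCLM c₁ c₂ !₂[ζh, ζc] -
        w • !₂[kh, kc]) =
      (starRingEnd ℂ) ζh * (-(u₁ : ℂ) * ζh' - (c₁ : ℂ) * (ζh - ζc) - w * kh) +
        (starRingEnd ℂ) ζc * ((u₂ : ℂ) * ζc' + (c₂ : ℂ) * (ζh - ζc) - w * kc) := by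
  simp only [transportCLM_apply, couplingCLM_apply, PiLp.inner_apply, Fin.sum_univ_two,
    PiLp.sub_apply, PiLp.add_apply, PiLp.smul_apply, Matrix.cons_val_zero, Matrix.cons_val_one,
    Matrix.cons_val_fin_one, RCLike.inner_apply, Complex.real_smul, Complex.ofReal_neg, smul_eq_mul]
  ring

theorem perturbed_operator_quasi_dissipative_general {a b u₁ u₂ : ℝ} (c₁ c₂ : ℝ) (hab : a ≤ b)
    (hu₁ : 0 ≤ u₁) (hu₂ : 0 < u₂) {κh κc : ℝ → ℂ} (hκh : MemLp κh 2 (volume.restrict (Ioc a b)))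
    (hκc : MemLp κc 2 (volume.restrict (Ioc a b))) {zh zc zh' zc' : ℝ → ℂ}
    (hzh : IsPrimitiveOn zh zh' a b) (hzc : IsPrimitiveOn zc zc' a b) (hbca : zh a = 0)
    (hbcb : zc b = 0) :
    (∫ x in a..b,
        ((starRingEnd ℂ) (zh x) *
            (-(u₁ : ℂ) * zh' x - (c₁ : ℂ) * (zh x - zc x) - zc a * κh x) +
          (starRingEnd ℂ) (zc x) *
            ((u₂ : ℂ) * zc' x + (c₂ : ℂ) * (zh x - zc x) - zc a * κc x))).re ≤
      (specNormM c₁ c₂ + (∫ x in a..b, (‖κh x‖ ^ 2 + ‖κc x‖ ^ 2)) / (2 * u₂)) *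
        ∫ x in a..b, (‖zh x‖ ^ 2 + ‖zc x‖ ^ 2) := by
  let z (x : ℝ) : EuclideanSpace ℂ (Fin 2) := !₂[zh x, zc x]
  let κ (x : ℝ) : EuclideanSpace ℂ (Fin 2) := !₂[κh x, κc x]
  have norm_sq (ζ η : ℂ) : ‖!₂[ζ, η]‖ ^ 2 = ‖ζ‖ ^ 2 + ‖η‖ ^ 2 := by
    simp [EuclideanSpace.norm_sq_eq]
  have hz : IsPrimitiveOn z (fun x ↦ !₂[zh' x, zc' x]) a b :=
    .piLp (Fin.forall_fin_two.2 ⟨hzh, hzc⟩)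
  have hκ : MemLp κ 2 (volume.restrict (Ioc a b)) :=
    memLp_piLp_iff.2 (Fin.forall_fin_two.2 ⟨hκh, hκc⟩)
  have hk := hκ.const_smul (zc a)
  have hAz : IntervalIntegrable (fun x ↦ transportCLM u₁ u₂ !₂[zh' x, zc' x] +
      couplingCLM c₁ c₂ (z x) - zc a • κ x) volume a b :=
    ((hz.clm_comp ((transportCLM u₁ u₂).restrictScalars ℝ)).intervalIntegrable.add
      ((couplingCLM c₁ c₂).continuous.comp_continuousOn hz.continuousOn).intervalIntegrable).sub
      ((intervalIntegrable_iff_integrableOn_Ioc_of_le hab).2 (hk.integrable one_le_two))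
  have hboundary : inner ℝ (z b) (transportCLM u₁ u₂ (z b)) -
      inner ℝ (z a) (transportCLM u₁ u₂ (z a)) ≤ -(u₂ * ‖zc a‖ ^ 2) := by
    have outflow_nonneg : 0 ≤ u₁ * ‖zh b‖ ^ 2 := by positivity
    simpa [inner_transportCLM, z, hbca, hbcb] using outflow_nonneg
  have hkK : ∫ x in a..b, ‖zc a • κ x‖ ^ 2 ≤ ‖zc a‖ ^ 2 * ∫ x in a..b, ‖κ x‖ ^ 2 := by
    simp only [norm_smul, mul_pow, intervalIntegral.integral_const_mul, le_refl]
  simp only [← inner_transportCLM_add_couplingCLM_sub, ← norm_sq]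
  rw [re_integral_complex_inner hz.continuousOn hAz]
  exact hz.integral_inner_perturbed_transport_le_mul (isSymmetric_transportCLM u₁ u₂)
    (couplingCLM c₁ c₂).continuous (inner_couplingCLM_self_le c₁ c₂) hab hu₂ hboundary hk
    (intervalIntegral.integral_nonneg hab fun _ _ ↦ by positivity) hkK

theorem IsH1.isPrimitiveOn {f f' : ℝ → ℂ} (h : IsH1 f f') : IsPrimitiveOn f f' 0 1 :=
  ⟨h.2.1, uIcc_of_le (zero_le_one' ℝ) ▸ h.2.2.2⟩

theorem MemL2.memLp {f : ℝ → ℂ} (h : MemL2 f) : MemLp f 2 (volume.restrict (Ioc 0 1)) :=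
  (memLp_two_iff_integrable_sq_norm (h.1.mono_set Ioc_subset_Icc_self)).2
    ((intervalIntegrable_iff_integrableOn_Ioc_of_le zero_le_one).1 h.2)

end HeatExchanger

/-- for `κ ∈ L²([0,1]; ℂ²)` and `z ∈ D(A)`, the perturbed operator
`A − κC` is quasi-dissipative: `Re ⟨z, (A − κC)z⟩ ≤ (|M|₂ + ‖κ‖²/u₂) ‖z‖²`,
where `(A − κC)z = Az − z^c(0)·κ`. -/
theorem perturbed_operator_quasi_dissipative
    (u₁ u₂ c₁ c₂ : ℝ) (hu₁ : 0 < u₁) (hu₂ : 0 < u₂) (hc₁ : 0 < c₁) (hc₂ : 0 < c₂)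
    (κh κc : ℝ → ℂ) (hκh : MemL2 κh) (hκc : MemL2 κc)
    (zh zc zh' zc' : ℝ → ℂ)
    (hzh : IsH1 zh zh') (hzc : IsH1 zc zc')
    (hbc0 : zh 0 = 0) (hbc1 : zc 1 = 0) :
    (∫ x in (0:ℝ)..1,
        ((starRingEnd ℂ) (zh x) *
            (-(u₁ : ℂ) * zh' x - (c₁ : ℂ) * (zh x - zc x) - zc 0 * κh x) +
          (starRingEnd ℂ) (zc x) *
            ((u₂ : ℂ) * zc' x + (c₂ : ℂ) * (zh x - zc x) - zc 0 * κc x))).re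
      ≤ (specNormM c₁ c₂
            + (∫ x in (0:ℝ)..1, (‖κh x‖ ^ 2 + ‖κc x‖ ^ 2)) / u₂)
          * ∫ x in (0:ℝ)..1, (‖zh x‖ ^ 2 + ‖zc x‖ ^ 2) := by
  have hZ : 0 ≤ ∫ x in (0 : ℝ)..1, (‖zh x‖ ^ 2 + ‖zc x‖ ^ 2) :=
    intervalIntegral.integral_nonneg zero_le_one fun _ _ ↦ by positivity
  have hK : 0 ≤ ∫ x in (0 : ℝ)..1, (‖κh x‖ ^ 2 + ‖κc x‖ ^ 2) :=
    intervalIntegral.integral_nonneg zero_le_one fun _ _ ↦ by positivity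
  refine (perturbed_operator_quasi_dissipative_general c₁ c₂ zero_le_one hu₁.le hu₂ hκh.memLp
    hκc.memLp hzh.isPrimitiveOn hzc.isPrimitiveOn hbc0 hbc1).trans ?_
  gcongr
  linarith
end

section
/- Fix λ₀ > 0 and λ ∈ ℂ with θ₁(λ) ≠ θ₂(λ). If a differentiable function v = (v^h, v^c) : [0,1] → ℂ² satisfies v^h(0) = 0, v^c(1) = 0 and the eigenvalue equations −u₁ (v^h)' − c₁(v^h − v^c) = (λ − λ₀) v^h and u₂ (v^c)' + c₂(v^h − v^c) = (λ − λ₀) v^c on [0,1], then there exists ℓ ∈ ℂ such that v = ℓ·v_λ, where v_λ^h(x) = e^{θ₁(λ)x} − e^{θ₂(λ)x} and v_λ^c(x) = (u₁/c₁)(θ₁(λ) e^{θ₁(λ)x} − θ₂(λ) e^{θ₂(λ)x}) + ((λ − λ₀ + c₁)/c₁)(e^{θ₁(λ)x} − e^{θ₂(λ)x}). In particular, each eigenspace of A_s = A + λ₀·I is at most one-dimensional. -/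
open Complex

/-- `θ₁, θ₂` are the two roots (via Vieta's formulas) of the characteristic equation
`r² + a(λ) r + b(λ) = 0`. -/
def CharRoots (u₁ u₂ c₁ c₂ lam0 : ℝ) (lam θ₁ θ₂ : ℂ) : Prop :=
  θ₁ + θ₂ = -((((u₂ : ℂ) - u₁) * (lam - (lam0 : ℂ)) + (u₂ : ℂ) * c₁ - (u₁ : ℂ) * c₂)
      / ((u₁ : ℂ) * u₂)) ∧
  θ₁ * θ₂ = -(((lam - (lam0 : ℂ)) ^ 2 + (lam - (lam0 : ℂ)) * ((c₁ : ℂ) + c₂))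
      / ((u₁ : ℂ) * u₂))

/-- `v_λ^h(x) = e^{θ₁x} − e^{θ₂x}`. -/
noncomputable def vlamh (θ₁ θ₂ : ℂ) : ℝ → ℂ := fun x =>
  Complex.exp (θ₁ * x) - Complex.exp (θ₂ * x)

/-- `v_λ^c(x) = (u₁/c₁)(θ₁ e^{θ₁x} − θ₂ e^{θ₂x}) + ((λ − λ₀ + c₁)/c₁)(e^{θ₁x} − e^{θ₂x})`. -/
noncomputable def vlamc (u₁ c₁ lam0 : ℝ) (lam θ₁ θ₂ : ℂ) : ℝ → ℂ := fun x =>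
  ((u₁ : ℂ) / c₁) * (θ₁ * Complex.exp (θ₁ * x) - θ₂ * Complex.exp (θ₂ * x))
    + ((lam - (lam0 : ℂ) + c₁) / c₁) * (Complex.exp (θ₁ * x) - Complex.exp (θ₂ * x))

/-!
Solved for the derivatives, the eigenvalue equations are a linear system `v' = M v` with constant
coefficients, and `θ₁`, `θ₂` are the eigenvalues of `M`. The eigenvectors `wᵢ = (M₀₁, θᵢ - M₀₀)`
have the same first entry, so `w₁ - w₂` is a nonzero multiple of `(0, 1)`, and any initial value
with `v^h(0) = 0` is `ℓ (w₁ - w₂)` for some `ℓ`. By uniqueness for the initial value problem,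
`v(x) = ℓ (e^{θ₁x} w₁ - e^{θ₂x} w₂)`, which is a multiple of `v_λ(x)`.
-/

section LinearODE

variable {E : Type*} [NormedAddCommGroup E] {γ δ : ℝ → E}

theorem eqOn_Icc_of_isIntegralCurveOn [NormedSpace ℝ E] {v : ℝ → E → E} {K : NNReal} {a b : ℝ}
    (hv : ∀ t ∈ Set.Ico a b, LipschitzWith K (v t)) (hγ : IsIntegralCurveOn γ v (Set.Icc a b))
    (hδ : IsIntegralCurveOn δ v (Set.Icc a b)) (ha : γ a = δ a) :
    Set.EqOn γ δ (Set.Icc a b) := by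
  have derivWithin_Ici {η : ℝ → E} (hη : IsIntegralCurveOn η v (Set.Icc a b)) :
      ∀ t ∈ Set.Ico a b, HasDerivWithinAt η (v t (η t)) (Set.Ici t) t := fun t ht ↦
    (hη t (Set.Ico_subset_Icc_self ht)).mono_of_mem_nhdsWithin (Icc_mem_nhdsGE_of_mem ht)
  exact ODE_solution_unique_of_mem_Icc_right (s := fun _ ↦ Set.univ)
    (fun t ht ↦ (hv t ht).lipschitzOnWith) hγ.continuousOn (derivWithin_Ici hγ)
    (fun _ _ ↦ Set.mem_univ _) hδ.continuousOn (derivWithin_Ici hδ) (fun _ _ ↦ Set.mem_univ _) ha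

variable [NormedSpace ℂ E] {ι : Type*} {s : Finset ι} {θ : ι → ℂ} {w : ι → E}

theorem isIntegralCurve_sum_exp_smul {A : E →ₗ[ℂ] E} (hw : ∀ i ∈ s, A (w i) = θ i • w i) :
    IsIntegralCurve (fun t : ℝ ↦ ∑ i ∈ s, exp (θ i * t) • w i) (fun _ ↦ A) := by
  intro t
  have hasDerivAt_exp (i : ι) : HasDerivAt (fun t : ℝ ↦ exp (θ i * t)) (exp (θ i * t) * θ i) t := by
    simpa using ((hasDerivAt_id (t : ℂ)).const_mul (θ i)).cexp.comp_ofReal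
  have map_sum_exp : A (∑ i ∈ s, exp (θ i * t) • w i) = ∑ i ∈ s, (exp (θ i * t) * θ i) • w i := by
    rw [map_sum]
    exact Finset.sum_congr rfl fun i hi ↦ by rw [map_smul, hw i hi, smul_smul]
  exact (HasDerivAt.fun_sum fun i _ ↦ (hasDerivAt_exp i).smul_const (w i)).congr_deriv
    map_sum_exp.symm

theorem eqOn_sum_exp_smul_of_isIntegralCurveOn {A : E →L[ℂ] E} {T : ℝ}
    (hw : ∀ i ∈ s, A (w i) = θ i • w i) (hγ : IsIntegralCurveOn γ (fun _ ↦ A) (Set.Icc 0 T))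
    (h₀ : γ 0 = ∑ i ∈ s, w i) :
    Set.EqOn γ (fun t : ℝ ↦ ∑ i ∈ s, exp (θ i * t) • w i) (Set.Icc 0 T) :=
  eqOn_Icc_of_isIntegralCurveOn (fun _ _ ↦ A.lipschitz) hγ
    ((isIntegralCurve_sum_exp_smul (A := A.toLinearMap) hw).isIntegralCurveOn _) (by simpa using h₀)

end LinearODE

section TwoByTwo

open Matrix

variable {R : Type*} [CommRing R]

theorem isRoot_charpoly_fin_two_iff {M : Matrix (Fin 2) (Fin 2) R} {θ : R} :
    M.charpoly.IsRoot θ ↔ θ ^ 2 - M.trace * θ + M.det = 0 := by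
  nontriviality R
  simp [charpoly_fin_two]

/-- The vector `(M₀₁, θ - M₀₀)`, which the first row of `M - θ` annihilates. For an
eigenvalue `θ` of `M` it is an eigenvector, unless it is zero. -/
def firstRowKernelVec (M : Matrix (Fin 2) (Fin 2) R) (θ : R) : Fin 2 → R :=
  ![M 0 1, θ - M 0 0]

theorem mulVec_firstRowKernelVec {M : Matrix (Fin 2) (Fin 2) R} {θ : R}
    (hθ : M.charpoly.IsRoot θ) :
    M *ᵥ firstRowKernelVec M θ = θ • firstRowKernelVec M θ := by
  rw [isRoot_charpoly_fin_two_iff, trace_fin_two, det_fin_two] at hθ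
  ext i
  simp only [firstRowKernelVec, mulVec, vec2_dotProduct, Pi.smul_apply, smul_eq_mul]
  fin_cases i
  · change M 0 0 * M 0 1 + M 0 1 * (θ - M 0 0) = θ * M 0 1
    ring
  · change M 1 0 * M 0 1 + M 1 1 * (θ - M 0 0) = θ * (θ - M 0 0)
    linear_combination -hθ

theorem firstRowKernelVec_sub (M : Matrix (Fin 2) (Fin 2) R) (θ₁ θ₂ : R) :
    firstRowKernelVec M θ₁ - firstRowKernelVec M θ₂ = ![0, θ₁ - θ₂] := by
  simp [firstRowKernelVec]

theorem eq_smul_exp_sub_exp_of_isIntegralCurveOn {M : Matrix (Fin 2) (Fin 2) ℂ} {θ₁ θ₂ : ℂ}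
    (h₁ : M.charpoly.IsRoot θ₁) (h₂ : M.charpoly.IsRoot θ₂) (hθ : θ₁ ≠ θ₂)
    {γ : ℝ → Fin 2 → ℂ} {T : ℝ} (hγ : IsIntegralCurveOn γ (fun _ ↦ M.mulVec) (Set.Icc 0 T))
    (h₀ : γ 0 0 = 0) {t : ℝ} (ht : t ∈ Set.Icc 0 T) :
    γ t = (γ 0 1 / (θ₁ - θ₂)) •
      (exp (θ₁ * t) • firstRowKernelVec M θ₁ - exp (θ₂ * t) • firstRowKernelVec M θ₂) := by
  set ℓ := γ 0 1 / (θ₁ - θ₂) with hℓ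
  let θ : Fin 2 → ℂ := ![θ₁, θ₂]
  let w : Fin 2 → Fin 2 → ℂ := ![ℓ • firstRowKernelVec M θ₁, -ℓ • firstRowKernelVec M θ₂]
  have eigenvectors : ∀ i ∈ Finset.univ,
      M.mulVecLin.toContinuousLinearMap (w i) = θ i • w i := by
    intro i _
    fin_cases i
    · change M *ᵥ (ℓ • firstRowKernelVec M θ₁) = θ₁ • ℓ • firstRowKernelVec M θ₁
      rw [mulVec_smul, mulVec_firstRowKernelVec h₁, smul_comm]
    · change M *ᵥ (-ℓ • firstRowKernelVec M θ₂) = θ₂ • -ℓ • firstRowKernelVec M θ₂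
      rw [mulVec_smul, mulVec_firstRowKernelVec h₂, smul_comm]
  have initial_value : γ 0 = ∑ i, w i := calc
    γ 0 = ![0, γ 0 1] := by ext i; fin_cases i <;> simp [h₀]
    _ = ℓ • ![0, θ₁ - θ₂] := by simp [hℓ, sub_ne_zero.2 hθ]
    _ = ℓ • firstRowKernelVec M θ₁ + -ℓ • firstRowKernelVec M θ₂ := by
      rw [← firstRowKernelVec_sub M, smul_sub, neg_smul, sub_eq_add_neg]
    _ = ∑ i, w i := (Fin.sum_univ_two w).symm
  have := eqOn_sum_exp_smul_of_isIntegralCurveOn eigenvectors hγ initial_value ht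
  simpa [w, θ, smul_sub, smul_comm ℓ, sub_eq_add_neg] using this

end TwoByTwo

/-- The matrix `M` for which the eigenvalue equations, solved for the derivatives, read `v' = M v`,
where `v = (v^h, v^c)` and `μ = λ - λ₀`. -/
noncomputable def eigenvalueMatrix (u₁ u₂ c₁ c₂ μ : ℂ) : Matrix (Fin 2) (Fin 2) ℂ :=
  !![-(μ + c₁) / u₁, c₁ / u₁; -c₂ / u₂, (μ + c₂) / u₂]

theorem firstRowKernelVec_eigenvalueMatrix {u₁ c₁ : ℂ} (hu₁ : u₁ ≠ 0) (u₂ c₂ μ θ : ℂ) :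
    firstRowKernelVec (eigenvalueMatrix u₁ u₂ c₁ c₂ μ) θ = u₁⁻¹ • ![c₁, u₁ * θ + μ + c₁] := by
  ext i
  fin_cases i
  · simp [firstRowKernelVec, eigenvalueMatrix, div_eq_inv_mul]
  · change θ - -(μ + c₁) / u₁ = u₁⁻¹ * (u₁ * θ + μ + c₁)
    field_simp
    ring

theorem isIntegralCurveOn_eigenvalueMatrix {u₁ u₂ c₁ c₂ μ : ℂ} (hu₁ : u₁ ≠ 0) (hu₂ : u₂ ≠ 0)
    {vh vc vh' vc' : ℝ → ℂ} {s : Set ℝ} (hdh : ∀ x ∈ s, HasDerivWithinAt vh (vh' x) s x)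
    (hdc : ∀ x ∈ s, HasDerivWithinAt vc (vc' x) s x)
    (heig : ∀ x ∈ s, -u₁ * vh' x - c₁ * (vh x - vc x) = μ * vh x ∧
      u₂ * vc' x + c₂ * (vh x - vc x) = μ * vc x) :
    IsIntegralCurveOn (fun x ↦ ![vh x, vc x]) (fun _ ↦ (eigenvalueMatrix u₁ u₂ c₁ c₂ μ).mulVec)
      s := by
  intro x hx
  obtain ⟨heq_h, heq_c⟩ := heig x hx
  have deriv_h : -(μ + c₁) / u₁ * vh x + c₁ / u₁ * vc x = vh' x := by
    field_simp
    linear_combination heq_h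
  have deriv_c : -c₂ / u₂ * vh x + (μ + c₂) / u₂ * vc x = vc' x := by
    field_simp
    linear_combination -heq_c
  have mulVec_eq : (eigenvalueMatrix u₁ u₂ c₁ c₂ μ).mulVec ![vh x, vc x] = ![vh' x, vc' x] := by
    rw [← deriv_h, ← deriv_c]
    ext i
    fin_cases i <;> exact Matrix.vec2_dotProduct _ _
  have hasDeriv : HasDerivWithinAt (fun x ↦ ![vh x, vc x]) ![vh' x, vc' x] s x :=
    hasDerivWithinAt_pi.2 (Fin.forall_fin_two.2 ⟨hdh x hx, hdc x hx⟩)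
  exact hasDeriv.congr_deriv mulVec_eq.symm

section CharRoots

variable {u₁ u₂ c₁ c₂ lam0 : ℝ} {lam θ₁ θ₂ : ℂ}

theorem CharRoots.symm (h : CharRoots u₁ u₂ c₁ c₂ lam0 lam θ₁ θ₂) :
    CharRoots u₁ u₂ c₁ c₂ lam0 lam θ₂ θ₁ :=
  ⟨add_comm θ₂ θ₁ ▸ h.1, mul_comm θ₂ θ₁ ▸ h.2⟩

theorem CharRoots.isRoot_charpoly (hu₁ : u₁ ≠ 0) (hu₂ : u₂ ≠ 0)
    (h : CharRoots u₁ u₂ c₁ c₂ lam0 lam θ₁ θ₂) :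
    (eigenvalueMatrix u₁ u₂ c₁ c₂ (lam - lam0)).charpoly.IsRoot θ₁ := by
  have hu₁' : (u₁ : ℂ) ≠ 0 := ofReal_ne_zero.2 hu₁
  have hu₂' : (u₂ : ℂ) ≠ 0 := ofReal_ne_zero.2 hu₂
  obtain ⟨hadd, hmul⟩ := h
  have trace_eq : (eigenvalueMatrix u₁ u₂ c₁ c₂ (lam - lam0)).trace = θ₁ + θ₂ := by
    rw [hadd, eigenvalueMatrix, Matrix.trace_fin_two_of]
    field_simp
    ring
  have det_eq : (eigenvalueMatrix u₁ u₂ c₁ c₂ (lam - lam0)).det = θ₁ * θ₂ := by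
    rw [hmul, eigenvalueMatrix, Matrix.det_fin_two_of]
    field_simp
    ring
  rw [isRoot_charpoly_fin_two_iff, trace_eq, det_eq]
  ring

theorem exp_smul_firstRowKernelVec_sub_eq_smul_vlam (hu₁ : u₁ ≠ 0) (hc₁ : c₁ ≠ 0) (x : ℝ) :
    exp (θ₁ * x) • firstRowKernelVec (eigenvalueMatrix u₁ u₂ c₁ c₂ (lam - lam0)) θ₁ -
        exp (θ₂ * x) • firstRowKernelVec (eigenvalueMatrix u₁ u₂ c₁ c₂ (lam - lam0)) θ₂ =
      (c₁ / u₁ : ℂ) • ![vlamh θ₁ θ₂ x, vlamc u₁ c₁ lam0 lam θ₁ θ₂ x] := by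
  have hu₁' : (u₁ : ℂ) ≠ 0 := ofReal_ne_zero.2 hu₁
  have hc₁' : (c₁ : ℂ) ≠ 0 := ofReal_ne_zero.2 hc₁
  rw [firstRowKernelVec_eigenvalueMatrix hu₁', firstRowKernelVec_eigenvalueMatrix hu₁']
  ext i
  fin_cases i
  · change exp (θ₁ * x) * ((u₁ : ℂ)⁻¹ * c₁) - exp (θ₂ * x) * ((u₁ : ℂ)⁻¹ * c₁) =
      c₁ / u₁ * vlamh θ₁ θ₂ x
    rw [vlamh]
    ring
  · change exp (θ₁ * x) * ((u₁ : ℂ)⁻¹ * (u₁ * θ₁ + (lam - lam0) + c₁)) -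
      exp (θ₂ * x) * ((u₁ : ℂ)⁻¹ * (u₁ * θ₂ + (lam - lam0) + c₁)) =
      c₁ / u₁ * vlamc u₁ c₁ lam0 lam θ₁ θ₂ x
    rw [vlamc]
    field_simp
    ring

end CharRoots

theorem eigenspace_one_dimensional_general
    {u₁ u₂ c₁ c₂ lam0 : ℝ} (hu₁ : u₁ ≠ 0) (hu₂ : u₂ ≠ 0) (hc₁ : c₁ ≠ 0)
    {lam θ₁ θ₂ : ℂ} (hroots : CharRoots u₁ u₂ c₁ c₂ lam0 lam θ₁ θ₂) (hθ : θ₁ ≠ θ₂)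
    {vh vc vh' vc' : ℝ → ℂ} {T : ℝ}
    (hdh : ∀ x ∈ Set.Icc 0 T, HasDerivWithinAt vh (vh' x) (Set.Icc 0 T) x)
    (hdc : ∀ x ∈ Set.Icc 0 T, HasDerivWithinAt vc (vc' x) (Set.Icc 0 T) x)
    (hbc0 : vh 0 = 0)
    (heig : ∀ x ∈ Set.Icc 0 T,
      -(u₁ : ℂ) * vh' x - (c₁ : ℂ) * (vh x - vc x) = (lam - (lam0 : ℂ)) * vh x ∧
      (u₂ : ℂ) * vc' x + (c₂ : ℂ) * (vh x - vc x) = (lam - (lam0 : ℂ)) * vc x) :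
    ∃ ℓ : ℂ, ∀ x ∈ Set.Icc 0 T,
      vh x = ℓ * vlamh θ₁ θ₂ x ∧ vc x = ℓ * vlamc u₁ c₁ lam0 lam θ₁ θ₂ x := by
  have hv := isIntegralCurveOn_eigenvalueMatrix (ofReal_ne_zero.2 hu₁) (ofReal_ne_zero.2 hu₂)
    hdh hdc heig
  refine ⟨vc 0 / (θ₁ - θ₂) * (c₁ / u₁), fun x hx ↦ ?_⟩
  have hvx := eq_smul_exp_sub_exp_of_isIntegralCurveOn (hroots.isRoot_charpoly hu₁ hu₂)
    (hroots.symm.isRoot_charpoly hu₁ hu₂) hθ hv hbc0 hx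
  rw [exp_smul_firstRowKernelVec_sub_eq_smul_vlam hu₁ hc₁, smul_smul] at hvx
  exact ⟨congrFun hvx 0, congrFun hvx 1⟩

/-- if `θ₁(λ) ≠ θ₂(λ)` then every solution `v` of the eigenvalue equations
of `A_s = A + λ₀ I` with boundary conditions `v^h(0) = 0`, `v^c(1) = 0` is a scalar
multiple of the explicit function `v_λ`; in particular each eigenspace of `A_s` is at
most one-dimensional. -/
theorem eigenspace_one_dimensional
    (u₁ u₂ c₁ c₂ lam0 : ℝ) (hu₁ : 0 < u₁) (hu₂ : 0 < u₂) (hc₁ : 0 < c₁) (hc₂ : 0 < c₂)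
    (hlam0 : 0 < lam0)
    (lam θ₁ θ₂ : ℂ) (hroots : CharRoots u₁ u₂ c₁ c₂ lam0 lam θ₁ θ₂) (hθ : θ₁ ≠ θ₂)
    (vh vc vh' vc' : ℝ → ℂ)
    (hdh : ∀ x ∈ Set.Icc (0:ℝ) 1, HasDerivAt vh (vh' x) x)
    (hdc : ∀ x ∈ Set.Icc (0:ℝ) 1, HasDerivAt vc (vc' x) x)
    (hbc0 : vh 0 = 0) (hbc1 : vc 1 = 0)
    (heig : ∀ x ∈ Set.Icc (0:ℝ) 1,
      -(u₁ : ℂ) * vh' x - (c₁ : ℂ) * (vh x - vc x) = (lam - (lam0 : ℂ)) * vh x ∧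
      (u₂ : ℂ) * vc' x + (c₂ : ℂ) * (vh x - vc x) = (lam - (lam0 : ℂ)) * vc x) :
    ∃ ℓ : ℂ, ∀ x ∈ Set.Icc (0:ℝ) 1,
      vh x = ℓ * vlamh θ₁ θ₂ x ∧ vc x = ℓ * vlamc u₁ c₁ lam0 lam θ₁ θ₂ x := by
  exact eigenspace_one_dimensional_general hu₁.ne' hu₂.ne' hc₁.ne' hroots hθ
    (fun x hx ↦ (hdh x hx).hasDerivWithinAt) (fun x hx ↦ (hdc x hx).hasDerivWithinAt) hbc0 heig
end
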